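/- arXiv:1910.09829 — 3 statements merged into one kernel-verified Lean document; each statement's English description precedes it below -/
import Mathlib

section
/- There exists a (non-deterministic) LSTS TS and a strong stubborn set r (a reduction function satisfying D0, D1, D2, V, I and L at every state, with finite reduced LSTS) such that the reduced LSTS TS_r is not stutter-trace equivalent to TS; hence strong stubborn sets with condition D1 do not in general preserve stutter-trace equivalence. -/
open scoped Classical

/-- The subsequence of an `Option`-valued sequence consisting of the values at the
indices satisfying `P`, in increasing order (`none` past the end when only finitely
many indices satisfy `P`). -/
noncomputable def subseq {α : Type*} (g : ℕ → Option α) (P : ℕ → Prop) : ℕ → Option α :=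
  fun k => if {i | P i}.Infinite ∨ k < {i | P i}.ncard then g (Nat.nth P k) else none

/-- The no-stutter trace of a sequence of labels (`none` marking positions past the end
of a finite sequence): the subsequence of those values at indices `i` such that `i = 0`
or the value differs from the one at `i - 1`. -/
noncomputable def nsTrace {α : Type*} (g : ℕ → Option α) : ℕ → Option α :=
  subseq g fun i => (g i).isSome ∧ (i = 0 ∨ g i ≠ g (i - 1))

/-- A (finite or infinite) path of a transition relation `Tr`.  `len` is the number of
transitions (`⊤` for an infinite path); the values of `states` and `acts` beyond the
length are irrelevant junk. -/
structure TPath {S : Type*} {A : Type*} (Tr : S → A → S → Prop) where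
  states : ℕ → S
  acts : ℕ → A
  len : ℕ∞
  valid : ∀ i : ℕ, (i : ℕ∞) < len → Tr (states i) (acts i) (states (i + 1))

/-- The sequence of state labels along a path (`none` beyond the end). -/
noncomputable def TPath.labelSeq {S A l : Type*}
    {Tr : S → A → S → Prop} (p : TPath Tr) (L : S → Set l) : ℕ → Option (Set l) :=
  fun i => if (i : ℕ∞) ≤ p.len then some (L (p.states i)) else none

/-- The sequence of actions along a path (`none` beyond the end). -/
noncomputable def TPath.actSeq {S A : Type*}
    {Tr : S → A → S → Prop} (p : TPath Tr) : ℕ → Option A :=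
  fun i => if (i : ℕ∞) < p.len then some (p.acts i) else none

/-- Stutter equivalence of two paths with respect to labellings `L₁`, `L₂`:
both are finite or both are infinite, and they have the same no-stutter trace. -/
def StutterEquiv {S₁ A₁ S₂ A₂ l : Type*}
    {Tr₁ : S₁ → A₁ → S₁ → Prop} {Tr₂ : S₂ → A₂ → S₂ → Prop}
    (L₁ : S₁ → Set l) (L₂ : S₂ → Set l) (p : TPath Tr₁) (q : TPath Tr₂) : Prop :=
  (p.len = ⊤ ↔ q.len = ⊤) ∧ nsTrace (p.labelSeq L₁) = nsTrace (q.labelSeq L₂)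

/-- Weak equivalence of two paths with respect to a set `I` of invisible actions:
both are finite or both are infinite, and the projections of their action sequences
onto the visible actions (those not in `I`) are equal. -/
def WeakEquiv {S₁ S₂ A : Type*}
    {Tr₁ : S₁ → A → S₁ → Prop} {Tr₂ : S₂ → A → S₂ → Prop}
    (I : Set A) (p : TPath Tr₁) (q : TPath Tr₂) : Prop :=
  (p.len = ⊤ ↔ q.len = ⊤) ∧
    subseq p.actSeq (fun i => (i : ℕ∞) < p.len ∧ p.acts i ∉ I) =
      subseq q.actSeq (fun i => (i : ℕ∞) < q.len ∧ q.acts i ∉ I)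

/-- A finite run of length `n` along `Tr`: `σ 0 -α 0→ σ 1 -α 1→ ⋯ -α (n-1)→ σ n`. -/
def FinRun {S A : Type*} (Tr : S → A → S → Prop) (n : ℕ) (σ : ℕ → S) (α : ℕ → A) : Prop :=
  ∀ i < n, Tr (σ i) (α i) (σ (i + 1))

/-- `a` is a key action in `s` w.r.t. the reduction function `r`: for all
`a₁, …, aₙ ∉ r s` and paths `s -a₁…aₙ→ s'`, the action `a` is enabled in `s'`. -/
def KeyAction {S A : Type*} (Tr : S → A → S → Prop) (r : S → Set A) (s : S) (a : A) : Prop :=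
  ∀ (n : ℕ) (σ : ℕ → S) (α : ℕ → A), σ 0 = s → FinRun Tr n σ α →
    (∀ i < n, α i ∉ r s) → ∃ t, Tr (σ n) a t

/-- Condition D0: if some action is enabled in `s`, then `r s` contains an enabled action. -/
def CondD0 {S A : Type*} (Tr : S → A → S → Prop) (r : S → Set A) (s : S) : Prop :=
  (∃ a t, Tr s a t) → ∃ a ∈ r s, ∃ t, Tr s a t

/-- Condition D1. -/
def CondD1 {S A : Type*} (Tr : S → A → S → Prop) (r : S → Set A) (s : S) : Prop :=
  ∀ a ∈ r s, ∀ (n : ℕ) (σ : ℕ → S) (α : ℕ → A) (sn' : S),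
    σ 0 = s → FinRun Tr n σ α → (∀ i < n, α i ∉ r s) → Tr (σ n) a sn' →
    ∃ σ' : ℕ → S, Tr s a (σ' 0) ∧ FinRun Tr n σ' α ∧ σ' n = sn'

/-- Condition D1' (strengthened D1): additionally, if `a` is invisible then
`sᵢ -a→ s'ᵢ` for every `1 ≤ i < n`. -/
def CondD1' {S A : Type*} (Tr : S → A → S → Prop) (I : Set A) (r : S → Set A) (s : S) : Prop :=
  ∀ a ∈ r s, ∀ (n : ℕ) (σ : ℕ → S) (α : ℕ → A) (sn' : S),
    σ 0 = s → FinRun Tr n σ α → (∀ i < n, α i ∉ r s) → Tr (σ n) a sn' →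
    ∃ σ' : ℕ → S, Tr s a (σ' 0) ∧ FinRun Tr n σ' α ∧ σ' n = sn' ∧
      (a ∈ I → ∀ i, 1 ≤ i → i < n → Tr (σ i) a (σ' i))

/-- Condition D2: every enabled action of `r s` is a key action in `s`. -/
def CondD2 {S A : Type*} (Tr : S → A → S → Prop) (r : S → Set A) (s : S) : Prop :=
  ∀ a ∈ r s, (∃ t, Tr s a t) → KeyAction Tr r s a

/-- Condition D2w: if some action is enabled in `s`, then `r s` contains a key action. -/
def CondD2w {S A : Type*} (Tr : S → A → S → Prop) (r : S → Set A) (s : S) : Prop :=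
  (∃ a t, Tr s a t) → ∃ a ∈ r s, KeyAction Tr r s a

/-- Condition V: if `r s` contains an enabled visible action, it contains all visible
actions. -/
def CondV {S A : Type*} (Tr : S → A → S → Prop) (I : Set A) (r : S → Set A) (s : S) : Prop :=
  (∃ a ∈ r s, a ∉ I ∧ ∃ t, Tr s a t) → ∀ a, a ∉ I → a ∈ r s

/-- Condition I: if an invisible action is enabled in `s`, then `r s` contains an
invisible key action. -/
def CondI {S A : Type*} (Tr : S → A → S → Prop) (I : Set A) (r : S → Set A) (s : S) : Prop :=
  (∃ a ∈ I, ∃ t, Tr s a t) → ∃ a ∈ r s, a ∈ I ∧ KeyAction Tr r s a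

/-- The states of the reduced LSTS: the smallest set of states containing the initial
state `s0` and closed under transitions labelled with actions of the stubborn set. -/
inductive RedReach {S A : Type*} (Tr : S → A → S → Prop) (r : S → Set A) (s0 : S) : S → Prop
  | refl : RedReach Tr r s0 s0
  | step {s a t} : RedReach Tr r s0 s → a ∈ r s → Tr s a t → RedReach Tr r s0 t

/-- The transition relation of the reduced LSTS. -/
def RedTr {S A : Type*} (Tr : S → A → S → Prop) (r : S → Set A) (s0 : S) :
    S → A → S → Prop :=
  fun s a t => RedReach Tr r s0 s ∧ a ∈ r s ∧ Tr s a t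

/-- Condition L: for every visible action `a`, every cycle in the reduced LSTS
contains a state `s` with `a ∈ r s`. -/
def CondL {S A : Type*} (Tr : S → A → S → Prop) (I : Set A) (r : S → Set A) (s0 : S) : Prop :=
  ∀ a ∉ I, ∀ (n : ℕ) (σ : ℕ → S) (α : ℕ → A), 0 < n →
    FinRun (RedTr Tr r s0) n σ α → σ n = σ 0 → ∃ i < n, a ∈ r (σ i)

/-- Condition C4: either `r s` consists of all actions, or `r s` contains precisely one
enabled action. -/
def CondC4 {S A : Type*} (Tr : S → A → S → Prop) (r : S → Set A) (s : S) : Prop :=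
  r s = Set.univ ∨ ∃! a, a ∈ r s ∧ ∃ t, Tr s a t

/-- `I` is a set of invisible actions w.r.t. the labelling `L`. -/
def InvisibleSet {S A l : Type*} (Tr : S → A → S → Prop) (L : S → Set l) (I : Set A) : Prop :=
  ∀ a ∈ I, ∀ s t, Tr s a t → L s = L t

/-- Reachability along `Tr`. -/
inductive Reach {S A : Type*} (Tr : S → A → S → Prop) (s0 : S) : S → Prop
  | refl : Reach Tr s0 s0
  | step {s a t} : Reach Tr s0 s → Tr s a t → Reach Tr s0 t

/-- Stutter-trace equivalence of two systems: for every initial path of the one there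
is a stutter equivalent initial path of the other, and vice versa. -/
def StutterTraceEquiv {S₁ A₁ S₂ A₂ l : Type*} (Tr₁ : S₁ → A₁ → S₁ → Prop) (i₁ : S₁)
    (L₁ : S₁ → Set l) (Tr₂ : S₂ → A₂ → S₂ → Prop) (i₂ : S₂) (L₂ : S₂ → Set l) : Prop :=
  (∀ p : TPath Tr₁, p.states 0 = i₁ →
      ∃ q : TPath Tr₂, q.states 0 = i₂ ∧ StutterEquiv L₁ L₂ p q) ∧
  (∀ q : TPath Tr₂, q.states 0 = i₂ →
      ∃ p : TPath Tr₁, p.states 0 = i₁ ∧ StutterEquiv L₁ L₂ p q)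

/-- Weak-trace equivalence of two systems with the same set `I` of invisible actions. -/
def WeakTraceEquiv {S₁ S₂ A : Type*} (Tr₁ : S₁ → A → S₁ → Prop) (i₁ : S₁)
    (Tr₂ : S₂ → A → S₂ → Prop) (i₂ : S₂) (I : Set A) : Prop :=
  (∀ p : TPath Tr₁, p.states 0 = i₁ → ∃ q : TPath Tr₂, q.states 0 = i₂ ∧ WeakEquiv I p q) ∧
  (∀ q : TPath Tr₂, q.states 0 = i₂ → ∃ p : TPath Tr₁, p.states 0 = i₁ ∧ WeakEquiv I p q)

/-- An LSTS is labelled consistently iff any two weakly equivalent paths starting in a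
common state are stutter equivalent. -/
def LabelledConsistently {S A l : Type*} (Tr : S → A → S → Prop) (L : S → Set l)
    (I : Set A) : Prop :=
  ∀ p q : TPath Tr, p.states 0 = q.states 0 → WeakEquiv I p q → StutterEquiv L L p q

/-- Label sequence of an explicitly given finite run with `n` transitions. -/
noncomputable def finLabelSeq {S l : Type*} (L : S → Set l) (n : ℕ) (σ : ℕ → S) :
    ℕ → Option (Set l) :=
  fun i => if i ≤ n then some (L (σ i)) else none

/-- Stutter equivalence of two explicitly given finite runs (with `n`, resp. `m`,
transitions); both are finite, so it only requires equality of no-stutter traces. -/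
def FinStutterEquiv {S l : Type*} (L : S → Set l) (n : ℕ) (σ : ℕ → S) (m : ℕ)
    (τ : ℕ → S) : Prop :=
  nsTrace (finLabelSeq L n σ) = nsTrace (finLabelSeq L m τ)

/-- Stutter equivalence of two explicitly given infinite runs; both are infinite, so it
only requires equality of no-stutter traces. -/
def InfStutterEquiv {S l : Type*} (L : S → Set l) (σ τ : ℕ → S) : Prop :=
  nsTrace (fun i => some (L (σ i))) = nsTrace (fun i => some (L (τ i)))

/-! The full system consists of the runs `0 -a→ 1 -b→ 2`, `3 -a→ 4` and `3 -a→ 5 -b→ 6`, linked by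
the transitions `0 -τ→ 3`, `1 -τ→ 4` and `2 -τ→ 6` of the invisible action `τ`; only `1` and `4` are
labelled with the atomic proposition. At `0`, condition D1 asks that `0 -a→ 1 -b→ 2 -τ→ 6` can be
rearranged to start with `τ`, but it only fixes the last state of the rearranged run. This run may
therefore be `0 -τ→ 3 -a→ 5 -b→ 6`, whose state `5` is not a `τ`-successor of `1` and need not carry
the label of `1`. With `{τ}` as stubborn set at `0`, the transition to `1` is pruned, so a
reduced path can meet the label only in the deadlock `4`, where it ends. The path `0 -a→ 1 -b→ 2`,
which gains the label and loses it again, has no counterpart. -/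

section Stubborn

variable {S A : Type*} {Tr : S → A → S → Prop} {I : Set A} {r : S → Set A} {s : S} {a : A}

/-- `r s` is a strong stubborn set as far as the conditions concern `s` alone. Condition L is left
out because it is about the cycles of the whole reduced LSTS. -/
def StrongStubbornAt (Tr : S → A → S → Prop) (I : Set A) (r : S → Set A) (s : S) : Prop :=
  CondD0 Tr r s ∧ CondD1 Tr r s ∧ CondD2 Tr r s ∧ CondV Tr I r s ∧ CondI Tr I r s

theorem eq_zero_of_forall_lt_notMem_univ {n : ℕ} {α : ℕ → A}
    (hα : ∀ i < n, α i ∉ Set.univ) : n = 0 := by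
  by_contra hn
  exact hα 0 (Nat.pos_of_ne_zero hn) (Set.mem_univ _)

theorem keyAction_of_eq_univ (h : r s = Set.univ) (ha : ∃ t, Tr s a t) : KeyAction Tr r s a := by
  rintro n σ α rfl - hα
  obtain rfl := eq_zero_of_forall_lt_notMem_univ (h ▸ hα)
  exact ha

theorem condD1_of_eq_univ (h : r s = Set.univ) : CondD1 Tr r s := by
  rintro a - n σ α t rfl - hα ht
  obtain rfl := eq_zero_of_forall_lt_notMem_univ (h ▸ hα)
  exact ⟨fun _ ↦ t, ht, nofun, rfl⟩

theorem strongStubbornAt_of_eq_univ (h : r s = Set.univ) : StrongStubbornAt Tr I r s := by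
  have mem (a : A) : a ∈ r s := h ▸ Set.mem_univ a
  refine ⟨?_, condD1_of_eq_univ h, fun _ _ ↦ keyAction_of_eq_univ h, fun _ a _ ↦ mem a, ?_⟩
  · rintro ⟨a, ha⟩
    exact ⟨a, mem a, ha⟩
  · rintro ⟨a, haI, ha⟩
    exact ⟨a, mem a, haI, keyAction_of_eq_univ h ha⟩

theorem KeyAction.enabled (h : KeyAction Tr r s a) : ∃ t, Tr s a t :=
  h 0 (fun _ ↦ s) (fun _ ↦ a) rfl nofun nofun

theorem strongStubbornAt_of_eq_singleton (h : r s = {a}) (haI : a ∈ I) (hD1 : CondD1 Tr r s)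
    (hkey : KeyAction Tr r s a) : StrongStubbornAt Tr I r s := by
  have mem_iff (b : A) : b ∈ r s ↔ b = a := by rw [h, Set.mem_singleton_iff]
  have ha : a ∈ r s := (mem_iff a).2 rfl
  refine ⟨fun _ ↦ ⟨a, ha, hkey.enabled⟩, hD1, fun b hb _ ↦ (mem_iff b).1 hb ▸ hkey, ?_,
    fun _ ↦ ⟨a, ha, haI, hkey⟩⟩
  rintro ⟨b, hb, hbI, -⟩
  exact absurd ((mem_iff b).1 hb ▸ haI) hbI

theorem keyAction_of_invariant {P : S → Prop} (hs : P s)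
    (hstep : ∀ u b v, P u → b ∉ r s → Tr u b v → P v) (hP : ∀ u, P u → ∃ t, Tr u a t) :
    KeyAction Tr r s a := by
  intro n σ α hσ hrun hα
  have hinv : ∀ i ≤ n, P (σ i) := by
    intro i
    induction i with
    | zero => exact fun _ ↦ hσ ▸ hs
    | succ i ih => exact fun hi ↦ hstep _ _ _ (ih (by lia)) (hα i hi) (hrun i hi)
  exact hP _ (hinv n le_rfl)

/-- A relation witnessing that an occurrence of `a` can be moved to the front of any run from `s`
with actions outside `T`. It relates a state of the given run to the state at the same position of
the rearranged run. It contains the `a`-transitions, but only at `s` must it consist of them,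
because D1 does not require matching intermediate states to be linked by `a`. -/
structure IsBackwardSimulation (Tr : S → A → S → Prop) (T : Set A) (s : S) (a : A)
    (R : S → S → Prop) : Prop where
  of_step : ∀ u u', Tr u a u' → R u u'
  step_of : ∀ s', R s s' → Tr s a s'
  pull_back : ∀ u b v v', b ∉ T → Tr u b v → R v v' → ∃ u', R u u' ∧ Tr u' b v'

theorem IsBackwardSimulation.exists_finRun {T : Set A} {R : S → S → Prop}
    (hR : IsBackwardSimulation Tr T s a R) {n : ℕ} {σ : ℕ → S} {α : ℕ → A} {t : S}
    (hrun : FinRun Tr n σ α) (hα : ∀ i < n, α i ∉ T) (ht : R (σ n) t) :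
    ∃ σ' : ℕ → S, R (σ 0) (σ' 0) ∧ FinRun Tr n σ' α ∧ σ' n = t := by
  induction n generalizing t with
  | zero => exact ⟨fun _ ↦ t, ht, nofun, rfl⟩
  | succ n ih =>
    obtain ⟨u, hu, hut⟩ := hR.pull_back _ _ _ _ (hα n n.lt_succ_self) (hrun n n.lt_succ_self) ht
    obtain ⟨σ', h0, hrun', rfl⟩ :=
      ih (fun i hi ↦ hrun i (hi.trans n.lt_succ_self)) (fun i hi ↦ hα i (hi.trans n.lt_succ_self))
        hu
    refine ⟨fun i ↦ if i ≤ n then σ' i else t, by simpa using h0, fun i hi ↦ ?_, by simp⟩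
    obtain hi | rfl := Nat.lt_succ_iff_lt_or_eq.1 hi
    · simpa [hi.le, Nat.succ_le_iff.2 hi] using hrun' i hi
    · simpa using hut

theorem condD1_of_isBackwardSimulation
    (h : ∀ a ∈ r s, ∃ R, IsBackwardSimulation Tr (r s) s a R) : CondD1 Tr r s := by
  rintro a ha n σ α t rfl hrun hα ht
  obtain ⟨R, hR⟩ := h a ha
  obtain ⟨σ', h0, hrun', hn⟩ := hR.exists_finRun hrun hα (hR.of_step _ _ ht)
  exact ⟨σ', hR.step_of _ h0, hrun', hn⟩

theorem condL_of_forall_lt {β : Type*} [Preorder β] {s0 : S} (f : S → β)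
    (hf : ∀ u b v, RedTr Tr r s0 u b v → f u < f v) : CondL Tr I r s0 := by
  intro b _ n σ α hn hrun hcycle
  have hlt : ∀ i < n, f (σ 0) < f (σ (i + 1)) := by
    intro i
    induction i with
    | zero => exact fun hi ↦ hf _ _ _ (hrun 0 hi)
    | succ i ih => exact fun hi ↦ (ih (by lia)).trans (hf _ _ _ (hrun _ hi))
  obtain ⟨m, rfl⟩ := Nat.exists_eq_add_one.2 hn
  exact absurd (hcycle ▸ hlt m m.lt_succ_self) (lt_irrefl _)

end Stubborn

section Trace

variable {α : Type*} {g : ℕ → Option α} {k : ℕ}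

theorem subseq_eq_none_iff {P : ℕ → Prop} (hP : ∀ i, P i → (g i).isSome) :
    subseq g P k = none ↔ {i | P i}.encard ≤ k := by
  rw [Set.encard_le_coe_iff_finite_ncard_le, subseq, ite_eq_right_iff]
  constructor
  · intro h
    by_contra hk
    rw [not_and_or, not_le] at hk
    refine Option.isSome_iff_ne_none.1 (hP _ (Nat.nth_mem k fun hf ↦ ?_)) (h hk)
    simpa [Set.ncard_eq_toFinset_card _ hf] using hk.resolve_left (not_not.2 hf)
  · rintro ⟨hfin, hle⟩ (hinf | hlt)
    · exact absurd hfin hinf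
    · exact absurd hlt hle.not_gt

/-- The positions that contribute to the no-stutter trace: those where a new block of equal values
begins. -/
def changePoints (g : ℕ → Option α) : Set ℕ :=
  {i | (g i).isSome ∧ (i = 0 ∨ g i ≠ g (i - 1))}

theorem nsTrace_eq_none_iff : nsTrace g k = none ↔ (changePoints g).encard ≤ k :=
  subseq_eq_none_iff fun _ ↦ And.left

variable {S A l : Type*} {Tr : S → A → S → Prop} {L : S → Set l}

theorem TPath.labelSeq_of_le {p : TPath Tr} {i : ℕ} (hi : (i : ℕ∞) ≤ p.len) :
    p.labelSeq L i = some (L (p.states i)) :=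
  if_pos hi

theorem TPath.mem_changePoints_labelSeq {p : TPath Tr} {i : ℕ} :
    i ∈ changePoints (p.labelSeq L) ↔
      (i : ℕ∞) ≤ p.len ∧ (i = 0 ∨ L (p.states i) ≠ L (p.states (i - 1))) := by
  by_cases hi : (i : ℕ∞) ≤ p.len
  · have hi' : ((i - 1 : ℕ) : ℕ∞) ≤ p.len := le_trans (by exact_mod_cast i.sub_le 1) hi
    simp [changePoints, labelSeq_of_le hi, labelSeq_of_le hi', hi]
  · simp [changePoints, TPath.labelSeq, hi]

theorem TPath.encard_changePoints_labelSeq_le_two (p : TPath Tr)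
    (h : ∀ s a t, Tr s a t → L s ≠ L t → ∀ b u, ¬Tr t b u) :
    (changePoints (p.labelSeq L)).encard ≤ 2 := by
  suffices hsub : changePoints (p.labelSeq L) ⊆ {0, p.len.toNat} from
    (Set.encard_le_encard hsub).trans <| (Set.encard_insert_le _ _).trans (by
      rw [Set.encard_singleton, one_add_one_eq_two])
  intro i hi
  obtain ⟨hlen, rfl | hne⟩ := mem_changePoints_labelSeq.1 hi
  · exact Set.mem_insert _ _
  cases i with
  | zero => exact Set.mem_insert _ _
  | succ i =>
    have hstep := p.valid i (lt_of_lt_of_le (by exact_mod_cast i.lt_succ_self) hlen)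
    have hend : p.len = (i + 1 : ℕ) := hlen.antisymm' <| not_lt.1 fun hlt ↦
      h _ _ _ hstep (Ne.symm hne) _ _ (p.valid (i + 1) hlt)
    exact Or.inr (hend ▸ (ENat.toNat_natCast _).symm)

end Trace

namespace D1Counterexample

/-- The actions of the counterexample; `τ` is the invisible one. -/
inductive Action
  | τ
  | a
  | b
  deriving DecidableEq

instance : Fintype Action where
  elems := {.τ, .a, .b}
  complete x := by cases x <;> decide

/-- The transition relation of the counterexample, with initial state `0`. The states are numbered
so that every transition increases the number. -/
def Step (s : Fin 7) (x : Action) (t : Fin 7) : Prop :=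
  (s, x, t) ∈ ([(0, .a, 1), (1, .b, 2), (0, .τ, 3), (1, .τ, 4), (2, .τ, 6),
    (3, .a, 4), (3, .a, 5), (5, .b, 6)] : List (Fin 7 × Action × Fin 7))

instance (s : Fin 7) (x : Action) (t : Fin 7) : Decidable (Step s x t) :=
  inferInstanceAs (Decidable (_ ∈ _))

/-- The labelling of the counterexample, by a single atomic proposition. -/
def label (s : Fin 7) : Set Unit := {_p | s = 1 ∨ s = 4}

/-- The reduction function of the counterexample, which prunes only the initial state. -/
def stubborn (s : Fin 7) : Set Action := if s = 0 then {.τ} else Set.univ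

theorem label_eq_label_iff {s t : Fin 7} : label s = label t ↔ (s = 1 ∨ s = 4 ↔ t = 1 ∨ t = 4) := by
  simp [label, Set.ext_iff]

theorem mem_stubborn_iff {s : Fin 7} {x : Action} : x ∈ stubborn s ↔ (s = 0 → x = .τ) := by
  by_cases hs : s = 0 <;> simp [stubborn, hs]

theorem stubborn_zero : stubborn 0 = {.τ} := if_pos rfl

theorem stubborn_of_ne_zero {s : Fin 7} (hs : s ≠ 0) : stubborn s = Set.univ := if_neg hs

theorem invisibleSet : InvisibleSet Step label {.τ} := by
  rintro _ rfl s t h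
  rw [label_eq_label_iff]
  revert s t
  decide

theorem keyAction_tau : KeyAction Step stubborn 0 .τ := by
  refine keyAction_of_invariant (P := (· ≤ 2)) (by decide) ?_ (by decide)
  rw [stubborn_zero]
  decide

/-- The relation along which `τ` is moved to the front of runs from `0`. The pair `(1, 5)` lets
`3 -a→ 5 -b→ 6` match `0 -a→ 1 -b→ 2`, although `5` is not a `τ`-successor of `1`. -/
def shiftTau (u u' : Fin 7) : Prop := Step u .τ u' ∨ u = 1 ∧ u' = 5

instance (u u' : Fin 7) : Decidable (shiftTau u u') := inferInstanceAs (Decidable (_ ∨ _))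

theorem isBackwardSimulation_shiftTau :
    IsBackwardSimulation Step {.τ} 0 .τ shiftTau where
  of_step _ _ := Or.inl
  step_of := by decide
  pull_back := by decide

theorem condD1_zero : CondD1 Step stubborn 0 := by
  refine condD1_of_isBackwardSimulation ?_
  rw [stubborn_zero]
  rintro _ rfl
  exact ⟨shiftTau, isBackwardSimulation_shiftTau⟩

theorem strongStubbornAt (s : Fin 7) : StrongStubbornAt Step {.τ} stubborn s := by
  obtain rfl | hs := eq_or_ne s 0
  · exact strongStubbornAt_of_eq_singleton stubborn_zero rfl condD1_zero keyAction_tau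
  · exact strongStubbornAt_of_eq_univ (stubborn_of_ne_zero hs)

theorem lt_of_step : ∀ s x t, Step s x t → s < t := by decide

theorem condL : CondL Step {.τ} stubborn 0 :=
  condL_of_forall_lt id fun _ _ _ h ↦ lt_of_step _ _ _ h.2.2

theorem ne_one_and_ne_two_of_redReach {s : Fin 7} (h : RedReach Step stubborn 0 s) :
    s ≠ 1 ∧ s ≠ 2 := by
  have hclosed : ∀ s x t, s ≠ 1 ∧ s ≠ 2 → (s = 0 → x = .τ) → Step s x t → t ≠ 1 ∧ t ≠ 2 := by
    decide
  induction h with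
  | refl => decide
  | step _ hx hst ih => exact hclosed _ _ _ ih (mem_stubborn_iff.1 hx) hst

theorem not_redTr_of_label_ne (s : Fin 7) (x : Action) (t : Fin 7)
    (h : RedTr Step stubborn 0 s x t) (hne : label s ≠ label t) (y : Action) (u : Fin 7) :
    ¬RedTr Step stubborn 0 t y u := by
  have hdead : ∀ s x t, s ≠ 1 ∧ s ≠ 2 → (s = 0 → x = .τ) → Step s x t →
      ¬(s = 1 ∨ s = 4 ↔ t = 1 ∨ t = 4) → ∀ y u, ¬Step t y u := by decide
  obtain ⟨hs, hx, hst⟩ := h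
  exact fun hu ↦ hdead s x t (ne_one_and_ne_two_of_redReach hs) (mem_stubborn_iff.1 hx) hst
    (mt label_eq_label_iff.2 hne) y u hu.2.2

/-- The path of the full system whose trace the reduced system lacks. -/
def lostPath : TPath Step where
  states := Fin.ofNat 7
  acts i := if i = 0 then .a else .b
  len := 2
  valid i hi := by
    have hi : i < 2 := by exact_mod_cast hi
    interval_cases i <;> decide

theorem two_lt_encard_changePoints_lostPath :
    2 < (changePoints (lostPath.labelSeq label)).encard := by
  have hsub : (Finset.range 3 : Set ℕ) ⊆ changePoints (lostPath.labelSeq label) := by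
    intro i hi
    have hi : i < 3 := by simpa using hi
    rw [TPath.mem_changePoints_labelSeq, ne_eq, label_eq_label_iff]
    refine ⟨show (i : ℕ∞) ≤ 2 by exact_mod_cast Nat.lt_succ_iff.1 hi, ?_⟩
    interval_cases i <;> decide
  refine lt_of_lt_of_le ?_ (Set.encard_le_encard hsub)
  rw [Set.encard_coe_eq_coe_finsetCard, Finset.card_range]
  norm_num

theorem not_stutterTraceEquiv :
    ¬StutterTraceEquiv (RedTr Step stubborn 0) 0 label Step 0 label := by
  rintro ⟨-, h⟩
  obtain ⟨p, -, -, htrace⟩ := h lostPath rfl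
  have hnone : nsTrace (p.labelSeq label) 2 = none :=
    nsTrace_eq_none_iff.2 (p.encard_changePoints_labelSeq_le_two not_redTr_of_label_ne)
  rw [htrace, nsTrace_eq_none_iff] at hnone
  exact two_lt_encard_changePoints_lostPath.not_ge hnone

end D1Counterexample

/-- There exists a (non-deterministic) LSTS `TS` and a strong stubborn set
`r` (a reduction function satisfying D0, D1, D2, V, I and L at every state, with finite
reduced LSTS) such that the reduced LSTS `TS_r` is not stutter-trace equivalent to `TS`. -/
theorem strong_stubborn_sets_with_D1_do_not_preserve_stutter_trace_equivalence :
    ∃ (S A AP : Type) (Tr : S → A → S → Prop) (s0 : S) (L : S → Set AP) (I : Set A)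
      (r : S → Set A),
      InvisibleSet Tr L I ∧
      (∃ s a t t', Tr s a t ∧ Tr s a t' ∧ t ≠ t') ∧
      (∀ s, CondD0 Tr r s ∧ CondD1 Tr r s ∧ CondD2 Tr r s ∧ CondV Tr I r s ∧
        CondI Tr I r s) ∧
      CondL Tr I r s0 ∧
      {s | RedReach Tr r s0 s}.Finite ∧
      ¬ StutterTraceEquiv (RedTr Tr r s0) s0 L Tr s0 L := by
  open D1Counterexample in
  exact ⟨Fin 7, Action, Unit, Step, 0, label, {Action.τ}, stubborn, invisibleSet,
    ⟨3, .a, 4, 5, by decide, by decide, by decide⟩, strongStubbornAt, condL, Set.toFinite _,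
    not_stutterTraceEquiv⟩
end

section
/- For deterministic LSTSs, conditions D1 and D2 together imply condition D1': if an LSTS is deterministic and a reduction function r satisfies D1 and D2 at every state, then r satisfies D1' at every state. -/
open scoped Classical

/-! Given a run `s -a₁…aₙ→ sₙ -a→ s'ₙ`, D1 provides a parallel run `s -a→ s' -a₁…aₙ→ s'ₙ`. Since `a`
is enabled in `s`, D2 makes `a` enabled in every intermediate `sᵢ`, so D1 also applies to the prefix
`s -a₁…aᵢ→ sᵢ -a→ t`. The parallel run it yields performs the same actions as the first one, so by
determinism both pass through the same states; hence `t = s'ᵢ`. -/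

/-- Determinism of an LSTS: a state has at most one successor under each action. Only the transition
relation is a parameter, since the initial state and the labelling do not matter. -/
def Deterministic {S A : Type*} (Tr : S → A → S → Prop) : Prop :=
  ∀ s a t t', Tr s a t → Tr s a t' → t = t'

section

variable {S A : Type*} {Tr : S → A → S → Prop} {m n : ℕ} {σ σ' : ℕ → S} {α : ℕ → A}

theorem FinRun.mono (hσ : FinRun Tr n σ α) (hmn : m ≤ n) : FinRun Tr m σ α :=
  fun i hi => hσ i (hi.trans_le hmn)

theorem FinRun.last_eq_of_deterministic (hdet : Deterministic Tr) (hσ : FinRun Tr n σ α)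
    (hσ' : FinRun Tr n σ' α) (h0 : σ 0 = σ' 0) : σ n = σ' n := by
  induction n with
  | zero => exact h0
  | succ k ih =>
    have hk : σ k = σ' k := ih (hσ.mono k.le_succ) (hσ'.mono k.le_succ)
    have hstep : Tr (σ' k) (α k) (σ (k + 1)) := hk ▸ hσ k k.lt_succ_self
    exact hdet _ _ _ _ hstep (hσ' k k.lt_succ_self)

variable {r : S → Set A} {s : S} {a : A}

theorem CondD1.tr_last_of_keyAction (hD1 : CondD1 Tr r s) (hdet : Deterministic Tr)
    (ha : a ∈ r s) (hkey : KeyAction Tr r s a) (hs : σ 0 = s) (hσ : FinRun Tr n σ α)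
    (hα : ∀ i < n, α i ∉ r s) (hfirst : Tr s a (σ' 0)) (hσ' : FinRun Tr n σ' α) :
    Tr (σ n) a (σ' n) := by
  obtain ⟨t, ht⟩ := hkey n σ α hs hσ hα
  obtain ⟨τ, hτfirst, hτ, rfl⟩ := hD1 a ha n σ α t hs hσ hα ht
  have hτ_eq : τ n = σ' n :=
    hτ.last_eq_of_deterministic hdet hσ' (hdet s a _ _ hτfirst hfirst)
  exact hτ_eq ▸ ht

theorem deterministic_D1_D2_implies_D1'_general (I : Set A) (hdet : Deterministic Tr)
    (hD1 : CondD1 Tr r s) (hD2 : CondD2 Tr r s) : CondD1' Tr I r s := by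
  intro a ha n σ α sn' hs hσ hα hlast
  obtain ⟨σ', hfirst, hσ', hσ'n⟩ := hD1 a ha n σ α sn' hs hσ hα hlast
  have hkey : KeyAction Tr r s a := hD2 a ha ⟨σ' 0, hfirst⟩
  refine ⟨σ', hfirst, hσ', hσ'n, fun _ i _ hin => ?_⟩
  exact hD1.tr_last_of_keyAction hdet ha hkey hs (hσ.mono hin.le)
    (fun j hj => hα j (hj.trans hin)) hfirst (hσ'.mono hin.le)

end

/-- For deterministic LSTSs, conditions D1 and D2 together imply condition
D1': if an LSTS is deterministic and a reduction function `r` satisfies D1 and D2 at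
every state, then `r` satisfies D1' at every state. -/
theorem deterministic_D1_D2_implies_D1' {S A : Type*} (Tr : S → A → S → Prop)
    (I : Set A) (r : S → Set A)
    (hdet : ∀ s a t t', Tr s a t → Tr s a t' → t = t')
    (hD1 : ∀ s, CondD1 Tr r s) (hD2 : ∀ s, CondD2 Tr r s) :
    ∀ s, CondD1' Tr I r s := by
  intro s
  exact deterministic_D1_D2_implies_D1'_general I hdet (hD1 s) (hD2 s)
end

section
/- Let TS be an LSTS and r a reduction function that satisfies either D0, D1, D2, V and L at every state, or D1, D2w, V and L at every state, and suppose the reduced LSTS TS_r has finitely many states. Then for every labelling l ⊆ AP: TS contains an initial path to a state s with L(s) = l if and only if TS_r contains an initial path to a state s' with L(s') = l. -/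
open scoped Classical

/-!
Given a path `s -w→ t` of the full system from a state `s` of the reduced one, we reach the label
of `t` inside the reduced system by moving along stubborn actions. If `w` contains an action of
`r s`, D1 moves the first such action to the front, and a shorter path to `t` remains. Otherwise a
key action of `r s` can be put in front of `w`: it is invisible by V as soon as `w` contains a
visible action, so the same word now leads to a state with the label of `t`. L and finiteness
forbid repeating the second move forever, and once `w` has only invisible actions, `s` itself has
the label of `t`.
-/

section Path

variable {S A : Type*} {Tr : S → A → S → Prop}

/-- `IsPath Tr s w t` is the paper's `s -a₁…aₙ→ t` for the word `w = a₁…aₙ`. Unlike in `FinRun`,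
the intermediate states are left implicit, so that paths can be cut and concatenated. -/
def IsPath (Tr : S → A → S → Prop) : S → List A → S → Prop
  | s, [], t => s = t
  | s, a :: w, t => ∃ u, Tr s a u ∧ IsPath Tr u w t

@[simp]
theorem isPath_nil {s t : S} : IsPath Tr s [] t ↔ s = t := Iff.rfl

@[simp]
theorem isPath_cons {s t : S} {a : A} {w : List A} :
    IsPath Tr s (a :: w) t ↔ ∃ u, Tr s a u ∧ IsPath Tr u w t := Iff.rfl

theorem isPath_append {s t : S} {v w : List A} :
    IsPath Tr s (v ++ w) t ↔ ∃ u, IsPath Tr s v u ∧ IsPath Tr u w t := by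
  induction v generalizing s with
  | nil => simp
  | cons a v ih =>
    simp only [List.cons_append, isPath_cons, ih]
    grind

theorem FinRun.isPath {n : ℕ} {σ : ℕ → S} {α : ℕ → A} (h : FinRun Tr n σ α) :
    IsPath Tr (σ 0) ((List.range n).map α) (σ n) := by
  induction n with
  | zero => simp
  | succ n ih =>
    rw [List.range_succ, List.map_append, isPath_append]
    exact ⟨σ n, ih fun i hi => h i (hi.trans n.lt_succ_self), σ (n + 1), h n n.lt_succ_self, rfl⟩

theorem IsPath.exists_finRun [Nonempty A] {s t : S} {w : List A} (h : IsPath Tr s w t) :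
    ∃ (σ : ℕ → S) (α : ℕ → A), σ 0 = s ∧ σ w.length = t ∧ FinRun Tr w.length σ α ∧
      (List.range w.length).map α = w := by
  induction w generalizing s with
  | nil => exact ⟨fun _ => s, fun _ => Classical.arbitrary A, rfl, h, by simp [FinRun], rfl⟩
  | cons a w ih =>
    obtain ⟨u, hsu, hut⟩ := h
    obtain ⟨σ, α, rfl, hσt, hrun, hα⟩ := ih hut
    refine ⟨fun i => i.casesOn s σ, fun i => i.casesOn a α, rfl, hσt, ?_, ?_⟩
    · rintro (_ | i) hi
      · exact hsu
      · exact hrun i (Nat.lt_of_succ_lt_succ hi)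
    · simpa [List.range_succ_eq_map, Function.comp_def] using hα

theorem Reach.exists_isPath {s₀ s : S} (h : Reach Tr s₀ s) : ∃ w, IsPath Tr s₀ w s := by
  induction h with
  | refl => exact ⟨[], rfl⟩
  | step _ hst ih =>
    obtain ⟨w, hw⟩ := ih
    exact ⟨w ++ [_], isPath_append.2 ⟨_, hw, _, hst, rfl⟩⟩

theorem exists_isPath_of_transGen {s t : S}
    (h : Relation.TransGen (fun s t => ∃ a, Tr s a t) s t) : ∃ w ≠ [], IsPath Tr s w t := by
  induction h with
  | single hst =>
    obtain ⟨a, hst⟩ := hst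
    exact ⟨[a], List.cons_ne_nil _ _, _, hst, rfl⟩
  | tail _ htu ih =>
    obtain ⟨w, -, hw⟩ := ih
    obtain ⟨a, htu⟩ := htu
    exact ⟨w ++ [a], by simp, isPath_append.2 ⟨_, hw, _, htu, rfl⟩⟩

theorem wellFounded_of_forall_cycle_eq_nil {F : Set S} (hF : F.Finite)
    (hTr : ∀ s a t, Tr s a t → s ∈ F ∧ t ∈ F) (hcycle : ∀ s w, IsPath Tr s w s → w = []) :
    WellFounded fun t s => ∃ a, Tr s a t := by
  let R : S → S → Prop := fun t s => ∃ a, Tr s a t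
  have hirrefl : Std.Irrefl (Relation.TransGen R) := by
    refine ⟨fun s hs => ?_⟩
    obtain ⟨w, hw, hpath⟩ := exists_isPath_of_transGen (Relation.transGen_swap.1 hs)
    exact hw (hcycle s w hpath)
  have : IsStrictOrder S (Relation.TransGen R) := { }
  refine (Set.wellFoundedOn_iff.1 (hF.wellFoundedOn (r := Relation.TransGen R))).mono ?_
  rintro t s ⟨a, hst⟩
  exact ⟨.single ⟨a, hst⟩, (hTr s a t hst).symm⟩

theorem IsPath.label_eq {l : Type*} {L : S → Set l} {I : Set A} (hI : InvisibleSet Tr L I)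
    {s t : S} {w : List A} (h : IsPath Tr s w t) (hw : ∀ a ∈ w, a ∈ I) : L s = L t := by
  induction w generalizing s with
  | nil => exact congrArg L h
  | cons a w ih =>
    obtain ⟨u, hsu, hut⟩ := h
    rw [List.forall_mem_cons] at hw
    exact (hI a hw.1 s u hsu).trans (ih hut hw.2)

end Path

section Conditions

variable {S A : Type*} {Tr : S → A → S → Prop} {I : Set A} {r : S → Set A}

theorem RedReach.reach {s₀ s : S} (h : RedReach Tr r s₀ s) : Reach Tr s₀ s := by
  induction h with
  | refl => exact .refl
  | step _ _ hst ih => exact ih.step hst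

theorem CondD2.condD2w {s : S} (h2 : CondD2 Tr r s) (h0 : CondD0 Tr r s) : CondD2w Tr r s :=
  fun hs =>
    let ⟨a, ha, hen⟩ := h0 hs
    ⟨a, ha, h2 a ha hen⟩

theorem KeyAction.enabled_of_isPath {s t : S} {a : A} {w : List A} (ha : KeyAction Tr r s a)
    (h : IsPath Tr s w t) (hw : ∀ b ∈ w, b ∉ r s) : ∃ u, Tr t a u := by
  have : Nonempty A := ⟨a⟩
  obtain ⟨σ, α, rfl, rfl, hrun, hα⟩ := h.exists_finRun
  rw [← hα] at hw
  exact ha _ σ α rfl hrun (by simpa using hw)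

theorem CondD1.exists_isPath {s t u : S} {a : A} {w : List A} (h1 : CondD1 Tr r s)
    (ha : a ∈ r s) (h : IsPath Tr s w t) (hw : ∀ b ∈ w, b ∉ r s) (htu : Tr t a u) :
    ∃ s', Tr s a s' ∧ IsPath Tr s' w u := by
  have : Nonempty A := ⟨a⟩
  obtain ⟨σ, α, rfl, rfl, hrun, hα⟩ := h.exists_finRun
  have hα_notMem : ∀ i < w.length, α i ∉ r (σ 0) := by
    rw [← hα] at hw
    simpa using hw
  obtain ⟨σ', hstep, hrun', rfl⟩ := h1 a ha _ σ α u rfl hrun hα_notMem htu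
  have hpath := hrun'.isPath
  rw [hα] at hpath
  exact ⟨σ' 0, hstep, hpath⟩

theorem CondD1.exists_shorter_isPath {s t : S} {w : List A} (h1 : CondD1 Tr r s)
    (h : IsPath Tr s w t) (hw : ∃ a ∈ w, a ∈ r s) :
    ∃ a ∈ r s, ∃ s', Tr s a s' ∧ ∃ w', IsPath Tr s' w' t ∧ w'.length < w.length := by
  obtain ⟨b, hbw, hb⟩ := hw
  obtain ⟨a, v, v', hv, ha, rfl, -⟩ :=
    List.exists_of_eraseP (p := fun c => decide (c ∈ r s)) hbw (by simpa using hb)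
  obtain ⟨u, hsu, u', huu', hut⟩ := isPath_append.1 h
  have har : a ∈ r s := by simpa using ha
  obtain ⟨s', hss', hs'u'⟩ := h1.exists_isPath har hsu (by simpa using hv) huu'
  exact ⟨a, har, s', hss', v ++ v', isPath_append.2 ⟨u', hs'u', hut⟩, by simp⟩

theorem CondV.mem_invisible_of_enabled {s : S} {a b : A} (hV : CondV Tr I r s) (ha : a ∈ r s)
    (hen : ∃ t, Tr s a t) (hbI : b ∉ I) (hb : b ∉ r s) : a ∈ I :=
  by_contra fun haI => hb (hV ⟨a, ha, haI, hen⟩ b hbI)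

theorem CondD1.exists_invisible_step {s t : S} {w : List A} (h1 : CondD1 Tr r s)
    (h2w : CondD2w Tr r s) (hV : CondV Tr I r s) (h : IsPath Tr s w t)
    (hw : ∀ a ∈ w, a ∉ r s) (hvis : ∃ a ∈ w, a ∉ I) :
    ∃ a ∈ r s, a ∈ I ∧ ∃ s' t', Tr s a s' ∧ IsPath Tr s' w t' ∧ Tr t a t' := by
  obtain ⟨b, hbw, hbI⟩ := hvis
  have hs : ∃ a u, Tr s a u := by
    cases w with
    | nil => simp at hbw
    | cons c w => exact ⟨c, h.imp fun _ => And.left⟩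
  obtain ⟨a, ha, hkey⟩ := h2w hs
  have hen : ∃ u, Tr s a u := hkey.enabled_of_isPath (isPath_nil.2 rfl) (by simp)
  obtain ⟨t', htt'⟩ := hkey.enabled_of_isPath h hw
  obtain ⟨s', hss', hs't'⟩ := h1.exists_isPath ha h hw htt'
  exact ⟨a, ha, hV.mem_invisible_of_enabled ha hen hbI (hw b hbw), s', t', hss', hs't', htt'⟩

end Conditions

section Ignoring

variable {S A : Type*} {Tr : S → A → S → Prop} {I : Set A} {r : S → Set A} {s₀ : S}

/-- The transitions of the reduced LSTS from states whose stubborn set does not contain `a`. The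
ignoring problem for `a` is an infinite path of these transitions. -/
def IgnoringTr (Tr : S → A → S → Prop) (r : S → Set A) (s₀ : S) (a : A) : S → A → S → Prop :=
  fun s b t => a ∉ r s ∧ RedTr Tr r s₀ s b t

theorem CondL.eq_nil_of_isPath_ignoringTr (hL : CondL Tr I r s₀) {a : A} (ha : a ∉ I) {s : S}
    {w : List A} (h : IsPath (IgnoringTr Tr r s₀ a) s w s) : w = [] := by
  have : Nonempty A := ⟨a⟩
  obtain ⟨σ, α, hσ₀, hσ, hrun, -⟩ := h.exists_finRun
  by_contra hw
  obtain ⟨i, hi, hai⟩ := hL a ha w.length σ α (List.length_pos_iff.2 hw)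
    (fun i hi => (hrun i hi).2) (hσ.trans hσ₀.symm)
  exact (hrun i hi).1 hai

theorem CondL.wellFounded_ignoringTr (hL : CondL Tr I r s₀)
    (hfin : {s | RedReach Tr r s₀ s}.Finite) {a : A} (ha : a ∉ I) :
    WellFounded fun t s => ∃ b, IgnoringTr Tr r s₀ a s b t :=
  wellFounded_of_forall_cycle_eq_nil hfin
    (fun _ _ _ h => ⟨h.2.1, h.2.1.step h.2.2.1 h.2.2.2⟩)
    fun _ _ => hL.eq_nil_of_isPath_ignoringTr ha

end Ignoring

theorem RedReach.exists_label_eq_of_isPath {S A l : Type*} {Tr : S → A → S → Prop} {s₀ : S}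
    {L : S → Set l} {I : Set A} {r : S → Set A} (hI : InvisibleSet Tr L I)
    (hconds : ∀ s, RedReach Tr r s₀ s → CondD1 Tr r s ∧ CondD2w Tr r s ∧ CondV Tr I r s)
    (hwf : ∀ a ∉ I, WellFounded fun t s => ∃ b, IgnoringTr Tr r s₀ a s b t)
    {s t : S} {w : List A} (hs : RedReach Tr r s₀ s) (h : IsPath Tr s w t) :
    ∃ s', RedReach Tr r s₀ s' ∧ L s' = L t := by
  induction hn : w.length using Nat.strong_induction_on generalizing s t w with
  | _ n ih_length =>
  subst hn
  by_cases hvis : ∃ a ∈ w, a ∉ I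
  · obtain ⟨k, hkw, hkI⟩ := hvis
    induction s using (hwf k hkI).induction generalizing t with
    | _ s ih_ignoring =>
    obtain ⟨h1, h2w, hV⟩ := hconds s hs
    by_cases hw : ∃ a ∈ w, a ∈ r s
    · obtain ⟨a, ha, s', hss', w', hs't, hlt⟩ := h1.exists_shorter_isPath h hw
      exact ih_length _ hlt (hs.step ha hss') hs't rfl
    · push Not at hw
      obtain ⟨a, ha, haI, s', t', hss', hs't', htt'⟩ :=
        h1.exists_invisible_step h2w hV h hw ⟨k, hkw, hkI⟩
      rw [hI a haI t t' htt']
      exact ih_ignoring s' ⟨a, hw k hkw, hs, ha, hss'⟩ (hs.step ha hss') hs't'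
  · push Not at hvis
    exact ⟨s, hs, h.label_eq hI hvis⟩

theorem stubborn_sets_preserve_reachability_general {S A l : Type*} (Tr : S → A → S → Prop)
    (s0 : S) (L : S → Set l) (I : Set A) (hI : InvisibleSet Tr L I) (r : S → Set A)
    (hconds : ∀ s, RedReach Tr r s0 s → CondD1 Tr r s ∧ CondD2w Tr r s ∧ CondV Tr I r s)
    (hwf : ∀ a ∉ I, WellFounded fun t s => ∃ b, IgnoringTr Tr r s0 a s b t)
    (lab : Set l) :
    (∃ s, Reach Tr s0 s ∧ L s = lab) ↔ (∃ s', RedReach Tr r s0 s' ∧ L s' = lab) := by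
  constructor
  · rintro ⟨s, hs, rfl⟩
    obtain ⟨w, hw⟩ := hs.exists_isPath
    exact RedReach.refl.exists_label_eq_of_isPath hI hconds hwf hw
  · rintro ⟨s, hs, hlab⟩
    exact ⟨s, hs.reach, hlab⟩

/-- Let `TS` be an LSTS and `r` a reduction function that satisfies either
D0, D1, D2, V and L at every state, or D1, D2w, V and L at every state, and suppose the
reduced LSTS `TS_r` has finitely many states.  Then for every labelling `lab ⊆ AP`:
`TS` contains an initial path to a state `s` with `L s = lab` iff `TS_r` contains an
initial path to a state `s'` with `L s' = lab`. -/
theorem stubborn_sets_preserve_reachability {S A l : Type*} (Tr : S → A → S → Prop)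
    (s0 : S) (L : S → Set l) (I : Set A) (hI : InvisibleSet Tr L I) (r : S → Set A)
    (hconds :
      (∀ s, CondD0 Tr r s ∧ CondD1 Tr r s ∧ CondD2 Tr r s ∧ CondV Tr I r s) ∨
      (∀ s, CondD1 Tr r s ∧ CondD2w Tr r s ∧ CondV Tr I r s))
    (hcondL : CondL Tr I r s0)
    (hfin : {s | RedReach Tr r s0 s}.Finite) :
    ∀ lab : Set l, (∃ s, Reach Tr s0 s ∧ L s = lab) ↔
      (∃ s', RedReach Tr r s0 s' ∧ L s' = lab) := by
  have hconds' (s : S) : CondD1 Tr r s ∧ CondD2w Tr r s ∧ CondV Tr I r s :=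
    hconds.elim (fun h => let ⟨h0, h1, h2, hV⟩ := h s; ⟨h1, h2.condD2w h0, hV⟩) fun h => h s
  exact stubborn_sets_preserve_reachability_general Tr s0 L I hI r (fun s _ => hconds' s)
    fun _ ha => hcondL.wellFounded_ignoringTr hfin ha
end
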